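/- (IAC probability of no majority candidate, partial ballots.) The IAC probability, over partial-ballot profiles with total 1, of the event that no candidate has a strict majority of first-place votes — i.e., ¬(X' > Y' + Z'), ¬(Y' > X' + Z'), and ¬(Z' > X' + Y') — equals 145/256. Equivalently, the 8-dimensional Lebesgue measure of the set of points of T' on which this event holds equals (145/256)·(1/8!). -/

import Mathlib

/-- A three-candidate partial-ballot profile: numbers of ballots with rankings
A≻B≻C, A≻C≻B, A only, B≻A≻C, B≻C≻A, B only, C≻A≻B, C≻B≻A, C only, respectively. -/
structure PProfile where
  x1 : ℝ
  x2 : ℝ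
  x3 : ℝ
  y1 : ℝ
  y2 : ℝ
  y3 : ℝ
  z1 : ℝ
  z2 : ℝ
  z3 : ℝ

namespace PProfile

def nonneg (q : PProfile) : Prop :=
  0 ≤ q.x1 ∧ 0 ≤ q.x2 ∧ 0 ≤ q.x3 ∧ 0 ≤ q.y1 ∧ 0 ≤ q.y2 ∧ 0 ≤ q.y3 ∧
    0 ≤ q.z1 ∧ 0 ≤ q.z2 ∧ 0 ≤ q.z3

instance : Add PProfile :=
  ⟨fun p q => ⟨p.x1 + q.x1, p.x2 + q.x2, p.x3 + q.x3, p.y1 + q.y1, p.y2 + q.y2,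
    p.y3 + q.y3, p.z1 + q.z1, p.z2 + q.z2, p.z3 + q.z3⟩⟩

/-- First-place total of candidate A. -/
def X (q : PProfile) : ℝ := q.x1 + q.x2 + q.x3
/-- First-place total of candidate B. -/
def Y (q : PProfile) : ℝ := q.y1 + q.y2 + q.y3
/-- First-place total of candidate C. -/
def Z (q : PProfile) : ℝ := q.z1 + q.z2 + q.z3
/-- Total vote. -/
def V (q : PProfile) : ℝ := q.X + q.Y + q.Z

end PProfile

inductive Cand | A | B | C

/-- Candidate `W` wins strictly under IRV (with exhausted ballots removed) in `q`. -/
def wins : Cand → PProfile → Prop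
  | Cand.A, q => q.X > q.Y + q.Z ∨
      (q.Z < q.X ∧ q.Z < q.Y ∧ q.X + q.z1 > q.Y + q.z2) ∨
      (q.Y < q.X ∧ q.Y < q.Z ∧ q.X + q.y1 > q.Z + q.y2)
  | Cand.B, q => q.Y > q.X + q.Z ∨
      (q.Z < q.Y ∧ q.Z < q.X ∧ q.Y + q.z2 > q.X + q.z1) ∨
      (q.X < q.Y ∧ q.X < q.Z ∧ q.Y + q.x1 > q.Z + q.x2)
  | Cand.C, q => q.Z > q.X + q.Y ∨
      (q.X < q.Z ∧ q.X < q.Y ∧ q.Z + q.x2 > q.Y + q.x1) ∨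
      (q.Y < q.Z ∧ q.Y < q.X ∧ q.Z + q.y2 > q.X + q.y1)

/-- Profile `q` demonstrates a reinforcement paradox for candidate `W`. -/
def paradox (W : Cand) (q : PProfile) : Prop :=
  ∃ q1 q2 : PProfile, q1.nonneg ∧ q2.nonneg ∧ q1 + q2 = q ∧
    wins W q1 ∧ wins W q2 ∧ ¬ wins W q

/-- The simplex of partial-ballot profiles with total 1, parameterized by the
first eight coordinates (X1, X2, X3, Y1, Y2, Y3, Z1, Z2). -/
def T' : Set (Fin 8 → ℝ) :=
  {v | (∀ i, 0 ≤ v i) ∧ v 0 + v 1 + v 2 + v 3 + v 4 + v 5 + v 6 + v 7 ≤ 1}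

/-- The partial-ballot profile with total 1 associated to a point of `T'`, with
`Z3 = 1` minus the sum of the eight coordinates. -/
noncomputable def pprofOf (v : Fin 8 → ℝ) : PProfile :=
  ⟨v 0, v 1, v 2, v 3, v 4, v 5, v 6, v 7,
    1 - (v 0 + v 1 + v 2 + v 3 + v 4 + v 5 + v 6 + v 7)⟩

/-!
Together with its slack, a point of `T'` consists of nine exchangeable nonnegative numbers of total
one. Integrating out the coordinates of a block one at a time shows that, on the simplex of
dimension `n`, the first `k` of these numbers have sum below `c` with the probability
`∑ j ≥ k, n.choose j * c ^ j * (1 - c) ^ (n - j)` that at least `k` out of `n` uniform points of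
`[0, 1]` lie below `c`. A candidate has a strict majority when the six numbers of the other two
candidates have sum below `1 / 2`, which has probability `(28 + 8 + 1) / 256 = 37 / 256`. The three
majority events are disjoint, hence `1 - 3 * 37 / 256 = 145 / 256`.
-/

open MeasureTheory
open Set (Icc Ico)
open scoped Finset
open Finset.HasAntidiagonal (antidiagonal mem_antidiagonal)

theorem measurePreserving_insertNth {α : Type*} [MeasureSpace α]
    [SigmaFinite (volume : Measure α)] {n : ℕ} (i : Fin (n + 1)) :
    MeasurePreserving (fun p : α × (Fin n → α) => (i.insertNth p.1 p.2 : Fin (n + 1) → α)) :=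
  (volume_preserving_piFinSuccAbove (fun _ => α) i).symm

theorem volume_eq_ofReal_integral_slices {n : ℕ} {B : Set (Fin (n + 1) → ℝ)}
    (hB : MeasurableSet B) (i : Fin (n + 1)) {a b : ℝ} (hab : a ≤ b) {g : ℝ → ℝ}
    (hg : IntervalIntegrable g volume a b) (hg_nonneg : ∀ x ∈ Icc a b, 0 ≤ g x)
    (h_in : ∀ x ∈ Ico a b,
      volume {y : Fin n → ℝ | i.insertNth x y ∈ B} = ENNReal.ofReal (g x))
    (h_out : ∀ v ∈ B, v i ∈ Icc a b) :
    volume B = ENNReal.ofReal (∫ x in a..b, g x) := by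
  have slice_eq (x : ℝ) (hx : x ≠ b) : volume {y : Fin n → ℝ | i.insertNth x y ∈ B} =
      (Icc a b).indicator (fun x => ENNReal.ofReal (g x)) x := by
    by_cases hxI : x ∈ Icc a b
    · rw [Set.indicator_of_mem hxI, h_in x ⟨hxI.1, hxI.2.lt_of_ne hx⟩]
    · have h_empty : {y : Fin n → ℝ | i.insertNth x y ∈ B} = ∅ :=
        Set.eq_empty_of_forall_notMem fun y hy => hxI (by simpa using h_out _ hy)
      rw [Set.indicator_of_notMem hxI, h_empty, measure_empty]
  calc volume B
      = ∫⁻ x : ℝ, volume {y : Fin n → ℝ | i.insertNth x y ∈ B} := by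
        rw [← (measurePreserving_insertNth i).measure_preimage hB.nullMeasurableSet,
          Measure.volume_eq_prod,
          Measure.prod_apply ((measurePreserving_insertNth i).measurable hB)]
        rfl
    _ = ∫⁻ x in Icc a b, ENNReal.ofReal (g x) := by
        rw [← lintegral_indicator measurableSet_Icc]
        refine lintegral_congr_ae ?_
        filter_upwards [Measure.ae_ne volume b] with x hx using slice_eq x hx
    _ = ENNReal.ofReal (∫ x in a..b, g x) := by
        rw [intervalIntegral.integral_of_le hab, ← integral_Icc_eq_integral_Ioc,
          ofReal_integral_eq_lintegral_ofReal
            ((intervalIntegrable_iff_integrableOn_Icc_of_le hab).1 hg)]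
        exact (ae_restrict_mem measurableSet_Icc).mono hg_nonneg

theorem integral_sub_pow_div_factorial (t : ℝ) (n : ℕ) :
    ∫ x in (0 : ℝ)..t, (t - x) ^ n / n.factorial = t ^ (n + 1) / (n + 1).factorial := by
  rw [intervalIntegral.integral_comp_sub_left fun x => x ^ n / n.factorial,
    intervalIntegral.integral_div, integral_pow, Nat.factorial_succ]
  push_cast
  field_simp
  simp

theorem add_pow_div_factorial {K : Type*} [Field K] [CharZero K] (x y : K) (n : ℕ) :
    (x + y) ^ n / n.factorial =
      ∑ p ∈ antidiagonal n, x ^ p.1 / p.1.factorial * (y ^ p.2 / p.2.factorial) := by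
  rw [(Commute.all x y).add_pow', Finset.sum_div]
  refine Finset.sum_congr rfl fun p hp => ?_
  rw [← mem_antidiagonal.1 hp, nsmul_eq_mul, Nat.cast_add_choose]
  have := Nat.cast_ne_zero (R := K).2 (p.1 + p.2).factorial_ne_zero
  field_simp

/-- The simplex of nonnegative vectors of total at most `t`, with a corner at the origin; its
elements are the first `n` of `n + 1` nonnegative numbers of total `t`, the last one being the
slack `t - ∑ i, v i`. -/
def cornerSimplex (n : ℕ) (t : ℝ) : Set (Fin n → ℝ) :=
  {v | (∀ i, 0 ≤ v i) ∧ ∑ i, v i ≤ t}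

theorem measurableSet_cornerSimplex (n : ℕ) (t : ℝ) : MeasurableSet (cornerSimplex n t) := by
  unfold cornerSimplex
  measurability

theorem insertNth_mem_cornerSimplex {n : ℕ} {t x : ℝ} {y : Fin n → ℝ} (i : Fin (n + 1)) :
    i.insertNth x y ∈ cornerSimplex (n + 1) t ↔ 0 ≤ x ∧ y ∈ cornerSimplex n (t - x) := by
  simp [cornerSimplex, i.forall_iff_succAbove, Fin.sum_univ_succAbove _ i, le_sub_iff_add_le',
    and_assoc]

theorem le_of_mem_cornerSimplex {n : ℕ} {t : ℝ} {v : Fin n → ℝ} (hv : v ∈ cornerSimplex n t)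
    (i : Fin n) : v i ≤ t :=
  (Finset.single_le_sum (fun j _ => hv.1 j) (Finset.mem_univ i)).trans hv.2

theorem volume_cornerSimplex (n : ℕ) {t : ℝ} (ht : 0 ≤ t) :
    volume (cornerSimplex n t) = ENNReal.ofReal (t ^ n / n.factorial) := by
  induction n generalizing t with
  | zero => simp [cornerSimplex, ht, volume_pi]
  | succ n ih =>
    rw [← integral_sub_pow_div_factorial]
    refine volume_eq_ofReal_integral_slices (measurableSet_cornerSimplex _ t) 0 ht
      (Continuous.intervalIntegrable (by fun_prop) _ _) (fun x hx => ?_) (fun x hx => ?_)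
      fun v hv => ⟨hv.1 0, le_of_mem_cornerSimplex hv 0⟩
    · have := sub_nonneg.2 hx.2
      positivity
    · simp only [insertNth_mem_cornerSimplex, hx.1, true_and, Set.ofPred_mem_eq]
      exact ih (sub_nonneg.2 hx.2.le)

theorem sum_eq_add_sum_filter_succAbove {M : Type*} [AddCommMonoid M] {n : ℕ}
    {s : Finset (Fin (n + 1))} {i : Fin (n + 1)} (hi : i ∈ s) (f : Fin (n + 1) → M) :
    ∑ j ∈ s, f j = f i + ∑ j with i.succAbove j ∈ s, f (i.succAbove j) := by
  rw [Finset.sum_filter, ← Finset.sum_ite_mem_eq s f, Fin.sum_univ_succAbove _ i, if_pos hi]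

theorem card_eq_card_filter_succAbove_add_one {n : ℕ} {s : Finset (Fin (n + 1))}
    {i : Fin (n + 1)} (hi : i ∈ s) : s.card = #{j | i.succAbove j ∈ s} + 1 := by
  simpa only [Finset.card_eq_sum_ones, add_comm] using
    sum_eq_add_sum_filter_succAbove hi fun _ => 1

theorem insertNth_slice_cornerSimplex_inter_sum_lt {n : ℕ} {s : Finset (Fin (n + 1))}
    {i : Fin (n + 1)} (hi : i ∈ s) {x : ℝ} (hx : 0 ≤ x) (c r : ℝ) :
    {y : Fin n → ℝ | i.insertNth x y ∈ cornerSimplex (n + 1) (c + r) ∩ {v | ∑ j ∈ s, v j < c}} =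
      cornerSimplex n (c - x + r) ∩ {y | ∑ j with i.succAbove j ∈ s, y j < c - x} := by
  ext y
  simp [insertNth_mem_cornerSimplex, hx, sum_eq_add_sum_filter_succAbove hi,
    lt_sub_iff_add_lt', sub_add_eq_add_sub]

theorem measurableSet_cornerSimplex_inter_sum_lt {n : ℕ} (s : Finset (Fin n)) (t c : ℝ) :
    MeasurableSet (cornerSimplex n t ∩ {v | ∑ j ∈ s, v j < c}) :=
  (measurableSet_cornerSimplex n t).inter (measurableSet_lt (by fun_prop) (by fun_prop))

theorem volume_cornerSimplex_inter_sum_lt {n : ℕ} (s : Finset (Fin n)) {c r : ℝ} (hc : 0 < c)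
    (hr : 0 ≤ r) :
    volume (cornerSimplex n (c + r) ∩ {v | ∑ j ∈ s, v j < c}) =
      ENNReal.ofReal (∑ p ∈ antidiagonal #sᶜ,
        c ^ (#s + p.1) / (#s + p.1).factorial * (r ^ p.2 / p.2.factorial)) := by
  induction hk : #s generalizing n c with
  | zero =>
    obtain rfl := Finset.card_eq_zero.1 hk
    simp [hc, volume_cornerSimplex n (add_pos_of_pos_of_nonneg hc hr).le, add_pow_div_factorial]
  | succ k ih =>
    obtain ⟨i, hi⟩ : s.Nonempty := Finset.card_pos.1 (by lia)
    obtain _ | n := n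
    · exact i.elim0
    have h_card := card_eq_card_filter_succAbove_add_one hi
    have h_compl : #({j | i.succAbove j ∈ s} : Finset (Fin n))ᶜ = #sᶜ := by
      rw [Finset.card_compl, Finset.card_compl, Fintype.card_fin, Fintype.card_fin]
      lia
    have h_integral : ∫ x in (0 : ℝ)..c, ∑ p ∈ antidiagonal #sᶜ,
        (c - x) ^ (k + p.1) / (k + p.1).factorial * (r ^ p.2 / p.2.factorial) =
        ∑ p ∈ antidiagonal #sᶜ,
          c ^ (k + 1 + p.1) / (k + 1 + p.1).factorial * (r ^ p.2 / p.2.factorial) := by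
      rw [intervalIntegral.integral_finsetSum fun p _ =>
        Continuous.intervalIntegrable (by fun_prop) _ _]
      simp only [intervalIntegral.integral_mul_const, integral_sub_pow_div_factorial,
        add_right_comm k]
    rw [← h_integral]
    refine volume_eq_ofReal_integral_slices (measurableSet_cornerSimplex_inter_sum_lt s _ c) i
      hc.le (Continuous.intervalIntegrable (by fun_prop) _ _) (fun x hx => ?_) (fun x hx => ?_)
      fun v hv => ⟨hv.1.1 i, (Finset.single_le_sum (fun j _ => hv.1.1 j) hi).trans hv.2.le⟩
    · have := sub_nonneg.2 hx.2
      positivity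
    · rw [insertNth_slice_cornerSimplex_inter_sum_lt hi hx.1, ih _ (sub_pos.2 hx.2) (by lia),
        h_compl]

/-- The exchange of the `i`-th coordinate with the slack `t - ∑ j, v j`, a volume-preserving
symmetry of `cornerSimplex n t` that makes the slack available as a coordinate. -/
def slackSwap {n : ℕ} (t : ℝ) (i : Fin n) (v : Fin n → ℝ) : Fin n → ℝ :=
  Function.update v i (t - ∑ j, v j)

theorem slackSwap_insertNth {n : ℕ} (t : ℝ) (i : Fin (n + 1)) (x : ℝ) (y : Fin n → ℝ) :
    slackSwap t i (i.insertNth x y) = i.insertNth (t - ∑ j, y j - x) y := by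
  simp [slackSwap, Fin.sum_univ_succAbove _ i, sub_sub, add_comm]

theorem measurePreserving_slackSwap {n : ℕ} (t : ℝ) (i : Fin n) :
    MeasurePreserving (slackSwap t i) := by
  obtain _ | n := n
  · exact i.elim0
  have h_meas : Measurable (slackSwap t i) := by unfold slackSwap; fun_prop
  have slices {B : Set (Fin (n + 1) → ℝ)} (hB : MeasurableSet B) :
      volume B = ∫⁻ y : Fin n → ℝ, volume {x : ℝ | i.insertNth x y ∈ B} := by
    rw [← (measurePreserving_insertNth i).measure_preimage hB.nullMeasurableSet,
      Measure.volume_eq_prod,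
      Measure.prod_apply_symm ((measurePreserving_insertNth i).measurable hB)]
    rfl
  refine ⟨h_meas, Measure.ext fun B hB => ?_⟩
  rw [Measure.map_apply h_meas hB, slices (h_meas hB), slices hB]
  refine lintegral_congr fun y => ?_
  simp only [Set.mem_preimage, slackSwap_insertNth]
  exact (volume.measurePreserving_sub_left (t - ∑ j, y j)).measure_preimage_equiv
    (f := MeasurableEquiv.subLeft _) {x | i.insertNth x y ∈ B}

theorem slackSwap_mem_cornerSimplex {n : ℕ} {t : ℝ} {i : Fin n} {v : Fin n → ℝ} :
    slackSwap t i v ∈ cornerSimplex n t ↔ v ∈ cornerSimplex n t := by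
  obtain _ | n := n
  · exact i.elim0
  rw [← i.insertNth_self_removeNth v, slackSwap_insertNth, insertNth_mem_cornerSimplex,
    insertNth_mem_cornerSimplex]
  simp only [cornerSimplex, Set.mem_ofPred_eq]
  grind

theorem sum_insert_compl_slackSwap {n : ℕ} (t : ℝ) {s : Finset (Fin n)} {i : Fin n} (hi : i ∈ s)
    (v : Fin n → ℝ) : ∑ j ∈ insert i sᶜ, slackSwap t i v j = t - ∑ j ∈ s, v j := by
  have hi' : i ∉ sᶜ := by simpa using hi
  rw [Finset.sum_insert hi', slackSwap, Function.update_self, Finset.sum_update_of_notMem hi',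
    ← Finset.sum_add_sum_compl s]
  ring

theorem volume_cornerSimplex_inter_lt_sum {n : ℕ} {s : Finset (Fin n)} {i : Fin n} (hi : i ∈ s)
    (t r : ℝ) :
    volume (cornerSimplex n t ∩ {v | r < ∑ j ∈ s, v j}) =
      volume (cornerSimplex n t ∩ {v | ∑ j ∈ insert i sᶜ, v j < t - r}) := by
  rw [← (measurePreserving_slackSwap t i).measure_preimage
    (measurableSet_cornerSimplex_inter_sum_lt (insert i sᶜ) t (t - r)).nullMeasurableSet]
  congr 1
  ext v
  simp [slackSwap_mem_cornerSimplex, sum_insert_compl_slackSwap t hi]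

theorem T'_eq_cornerSimplex : T' = cornerSimplex 8 1 := by
  simp only [T', cornerSimplex, Fin.sum_univ_eight]

theorem volume_T' : volume T' = ENNReal.ofReal (1 / 40320) := by
  rw [T'_eq_cornerSimplex, volume_cornerSimplex 8 zero_le_one]
  norm_num [Nat.factorial]

theorem volume_T'_inter_sum_lt_half {s : Finset (Fin 8)} (hs : #s = 6) :
    volume (T' ∩ {v | ∑ j ∈ s, v j < 1 / 2}) = ENNReal.ofReal (37 / 256 / 40320) := by
  have hs_compl : #sᶜ = 2 := by simp [Finset.card_compl, hs]
  have h := volume_cornerSimplex_inter_sum_lt s (c := 1 / 2) (r := 1 / 2) (by simp) (by simp)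
  rw [add_halves, ← T'_eq_cornerSimplex, hs, hs_compl] at h
  rw [h]
  -- `37 = 8.choose 6 + 8.choose 7 + 8.choose 8`
  norm_num [Finset.Nat.antidiagonal_succ, Nat.factorial]

theorem volume_T'_inter_half_lt_sum {s : Finset (Fin 8)} (hs : #s = 3) :
    volume (T' ∩ {v | 1 / 2 < ∑ j ∈ s, v j}) = ENNReal.ofReal (37 / 256 / 40320) := by
  obtain ⟨i, hi⟩ : s.Nonempty := Finset.card_pos.1 (by lia)
  have h_card : #(insert i sᶜ) = 6 := by
    rw [Finset.card_insert_of_notMem (by simpa using hi), Finset.card_compl, hs, Fintype.card_fin]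
  rw [T'_eq_cornerSimplex, volume_cornerSimplex_inter_lt_sum hi, ← T'_eq_cornerSimplex, sub_half,
    volume_T'_inter_sum_lt_half h_card]

/-- The first-place total of a candidate, with the candidate as an argument so that the three
majority events can be treated uniformly. -/
def firstPlace : Cand → PProfile → ℝ
  | .A => PProfile.X
  | .B => PProfile.Y
  | .C => PProfile.Z

/-- The profiles of total 1 in which `W` has a strict majority, encoded as a first-place total
above `1 / 2`. -/
def majority (W : Cand) : Set (Fin 8 → ℝ) :=
  T' ∩ {v | 1 / 2 < firstPlace W (pprofOf v)}

theorem measurableSet_majority (W : Cand) : MeasurableSet (majority W) := by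
  rw [majority, T'_eq_cornerSimplex]
  refine (measurableSet_cornerSimplex 8 1).inter (measurableSet_lt (by fun_prop) ?_)
  cases W <;> simp only [firstPlace, PProfile.X, PProfile.Y, PProfile.Z, pprofOf] <;> fun_prop

theorem volume_majority (W : Cand) :
    volume (majority W) = ENNReal.ofReal (37 / 256 / 40320) := by
  cases W
  case A =>
    rw [← volume_T'_inter_half_lt_sum (s := {0, 1, 2}) rfl]
    simp [majority, firstPlace, PProfile.X, pprofOf, add_assoc]
  case B =>
    rw [← volume_T'_inter_half_lt_sum (s := {3, 4, 5}) rfl]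
    simp [majority, firstPlace, PProfile.Y, pprofOf, add_assoc]
  case C =>
    rw [← volume_T'_inter_sum_lt_half (s := {0, 1, 2, 3, 4, 5}) rfl]
    have h_rest (v : Fin 8 → ℝ) :
        1 / 2 < firstPlace .C (pprofOf v) ↔ v 0 + v 1 + v 2 + v 3 + v 4 + v 5 < 1 / 2 := by
      simp only [firstPlace, PProfile.Z, pprofOf]
      constructor <;> intro h <;> linarith
    simp only [majority, h_rest]
    simp [add_assoc]

theorem firstPlace_nonneg {v : Fin 8 → ℝ} (hv : v ∈ T') (W : Cand) :
    0 ≤ firstPlace W (pprofOf v) := by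
  obtain ⟨hv, hsum⟩ := hv
  cases W <;> simp only [firstPlace, PProfile.X, PProfile.Y, PProfile.Z, pprofOf]
  · linarith [hv 0, hv 1, hv 2]
  · linarith [hv 3, hv 4, hv 5]
  · linarith [hv 6, hv 7]

theorem V_pprofOf (v : Fin 8 → ℝ) : (pprofOf v).V = 1 := by
  simp only [PProfile.V, PProfile.X, PProfile.Y, PProfile.Z, pprofOf]
  ring

theorem pairwise_disjoint_majority : Pairwise (Function.onFun Disjoint majority) := by
  refine fun W W' hWW' => Set.disjoint_left.2 fun v ⟨hv, hW⟩ ⟨_, hW'⟩ => ?_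
  have hA := firstPlace_nonneg hv .A
  have hB := firstPlace_nonneg hv .B
  have hC := firstPlace_nonneg hv .C
  have h_total := V_pprofOf v
  cases W <;> cases W' <;>
    simp_all only [firstPlace, PProfile.V, Set.mem_ofPred_eq, ne_eq, not_true] <;> linarith

theorem noMajority_eq_sdiff :
    {v ∈ T' | ¬ ((pprofOf v).X > (pprofOf v).Y + (pprofOf v).Z) ∧
              ¬ ((pprofOf v).Y > (pprofOf v).X + (pprofOf v).Z) ∧
              ¬ ((pprofOf v).Z > (pprofOf v).X + (pprofOf v).Y)} =
      T' \ (majority .A ∪ majority .B ∪ majority .C) := by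
  ext v
  have h_total := V_pprofOf v
  simp only [PProfile.V] at h_total
  simp only [majority, firstPlace, Set.mem_ofPred_eq, Set.mem_sdiff, Set.mem_union,
    Set.mem_inter_iff]
  grind

theorem volume_union_majority :
    volume (majority .A ∪ majority .B ∪ majority .C) = ENNReal.ofReal (111 / 256 / 40320) := by
  have hAB := pairwise_disjoint_majority (show Cand.A ≠ .B by simp)
  have hAC := pairwise_disjoint_majority (show Cand.A ≠ .C by simp)
  have hBC := pairwise_disjoint_majority (show Cand.B ≠ .C by simp)
  rw [measure_union (hAC.union_left hBC) (measurableSet_majority .C),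
    measure_union hAB (measurableSet_majority .B), volume_majority, volume_majority,
    volume_majority, ← ENNReal.ofReal_add, ← ENNReal.ofReal_add] <;> norm_num

theorem stmt19 :
    MeasureTheory.volume
      {v ∈ T' | ¬ ((pprofOf v).X > (pprofOf v).Y + (pprofOf v).Z) ∧
                ¬ ((pprofOf v).Y > (pprofOf v).X + (pprofOf v).Z) ∧
                ¬ ((pprofOf v).Z > (pprofOf v).X + (pprofOf v).Y)} =
      (145 / 256) * (1 / 40320 : ENNReal) := by
  have h_subset : majority .A ∪ majority .B ∪ majority .C ⊆ T' :=
    Set.union_subset (Set.union_subset Set.inter_subset_left Set.inter_subset_left)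
      Set.inter_subset_left
  have h_meas : MeasurableSet (majority .A ∪ majority .B ∪ majority .C) :=
    ((measurableSet_majority .A).union (measurableSet_majority .B)).union
      (measurableSet_majority .C)
  calc volume _
      = volume T' - volume (majority .A ∪ majority .B ∪ majority .C) := by
        rw [noMajority_eq_sdiff, measure_sdiff h_subset h_meas.nullMeasurableSet
          (by simp [volume_union_majority])]
    _ = ENNReal.ofReal (145 / 256 * (1 / 40320)) := by
        rw [volume_T', volume_union_majority, ← ENNReal.ofReal_sub _ (by norm_num)]
        norm_num
    _ = 145 / 256 * (1 / 40320) := by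
        rw [ENNReal.ofReal_mul (by norm_num), ENNReal.ofReal_div_of_pos (by norm_num),
          ENNReal.ofReal_div_of_pos (by norm_num)]
        simp
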